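/- Let d be an even natural number, D := d/2, and let Γ be a (D−1)-dimensional simplicial complex on a vertex set V, balanced via a map c : V → {1,…,D} that is injective on every face. Set h_i := f_{i−1}(Γ) for 0 ≤ i ≤ D and define g(2w) := h_D + 2·Σ_{j=1}^{D} h_{D−j}·T_j(w) ∈ ℚ[w], where T_j is the j-th Chebyshev polynomial of the first kind. Let A_Γ := { {(F,q,[q ∈ B]) : q ∈ Q} : (F,Q,B) a face of D(Γ) } be the collection of vertex sets of faces of the signed unused color complex D(Γ), viewed as a finite collection of nonempty finite subsets of the (arbitrarily linearly ordered) set of triples (F,q,ε). Then the following identity holds in ℚ[w]: (g(2w) + f_{D−1}(Γ))/2 − Σ_{j=0}^{D} f_{D−j−1}(Γ) + 1 = 1 + Σ_{k=1}^{D} f_{k−1}(T(A_Γ))·((w−1)/2)^k, i.e. the left-hand side equals the F-polynomial F_{T(A_Γ)}(w) of the Tchebyshev triangulation of D(Γ). -/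

import Mathlib

open Finset

/-- A (finite, abstract) simplicial complex on a subset of `ℕ`: a finite collection of finite
sets containing the empty set and closed under taking subsets. -/
def IsSimplicialComplex (S : Finset (Finset ℕ)) : Prop :=
  ∅ ∈ S ∧ ∀ σ ∈ S, ∀ τ ⊆ σ, τ ∈ S

/-- `faceCount Δ k` is the number of faces of `Δ` of cardinality `k`,
i.e. `f_{k-1}(Δ)` in the usual indexing. -/
def faceCount (Δ : Finset (Finset ℕ)) (k : ℕ) : ℕ :=
  (Δ.filter fun σ => σ.card = k).card

/-- The set of vertices of the original complex underlying a vertex `(u, v)` of the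
Tchebyshev triangulation: `{u, v} ∖ {1̂}`, where `1̂ = ⊤`. -/
def pairVertexSet {α : Type*} [DecidableEq α] (p : α × WithTop α) : Finset α :=
  WithTop.recTopCoe {p.1} (fun a => {p.1, a}) p.2

/-- The `(k-1)`-dimensional faces of the Tchebyshev triangulation `T(A)` of a collection `A`
of nonempty finite subsets of a linearly ordered set `V`. -/
def tchebFaces {α : Type*} [LinearOrder α] [DecidableEq α]
    (A : Finset (Finset α)) (k : ℕ) : Set (Finset (α × WithTop α)) :=
  {σ | ∃ e : Fin k → α × WithTop α,
      σ = Finset.image e Finset.univ ∧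
      StrictMono (fun i => (e i).2) ∧
      (∀ i, ((e i).1 : WithTop α) < (e i).2) ∧
      (Finset.univ.biUnion fun i => pairVertexSet (e i)) ∈ A ∧
      (∀ i j : Fin k, (i : ℕ) + 1 = (j : ℕ) →
        (e i).1 = (e j).1 ∨ (e i).2 ≤ ((e j).1 : WithTop α))}

/-- The collection `A_Γ` of vertex sets of faces of the signed unused color complex `D(Γ)`:
for each face `(F, Q, B)` of `D(Γ)` (with `F ∈ Γ`, `∅ ≠ Q ⊆ C_F`, `B ⊆ Q`), the set
`{(F, q, [q ∈ B]) : q ∈ Q}` of triples. -/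
def signedUnusedVertexSets (Γ : Finset (Finset ℕ)) (c : ℕ → ℕ) (D : ℕ) :
    Finset (Finset (Finset ℕ × ℕ × Bool)) :=
  Γ.biUnion fun F =>
    (((Finset.Icc 1 D \ F.image c).powerset.filter fun Q => Q ≠ ∅).biUnion fun Q =>
      Q.powerset.image fun B => Q.image fun q => (F, q, decide (q ∈ B)))

/-
A finite set of pairs with `u < v` is a face of the Tchebyshev triangulation when the intervals
`(u, v)` have distinct right ends and those with distinct left ends do not overlap. If `a < b` are
the two smallest elements of `{a, b} ∪ S`, every face with underlying vertex set `{a, b} ∪ S`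
contains the pair `(a, b)`, and deleting it leaves a face on `{a} ∪ S`, `{b} ∪ S` or `S`. Hence
`∑ y ^ #σ` over the faces on `S` depends only on `n = #S`, and satisfies
`P (n + 2) = y * (2 * P (n + 1) + P n)`. For `y = (w - 1) / 2` this is the recursion satisfied by
`2⁻ⁿ Δⁿ T₀`, where `Δ` is the forward difference on the sequence of Chebyshev polynomials.
A color set `Q` carries `2 ^ #Q` signed faces, which cancels `2⁻ⁿ`, so by Newton's formula
`∑_{Q ⊆ C} Δ^{#Q} T₀ = T_{#C}` the faces over `F ∈ Γ` contribute `T_{D - #F} - 1`, the `1` coming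
from the excluded `Q = ∅`.
-/

section UnderlyingVertices

variable {α : Type*} [DecidableEq α]

theorem mem_pairVertexSet {p : α × WithTop α} {x : α} :
    x ∈ pairVertexSet p ↔ p.1 = x ∨ p.2 = (x : WithTop α) := by
  obtain ⟨u, v⟩ := p
  cases v <;> simp [pairVertexSet, eq_comm]

/-- The vertices of the original complex used by a set of vertices of the Tchebyshev
triangulation. -/
def underlyingVertices (σ : Finset (α × WithTop α)) : Finset α :=
  σ.biUnion pairVertexSet

theorem mem_underlyingVertices {σ : Finset (α × WithTop α)} {x : α} :
    x ∈ underlyingVertices σ ↔ ∃ p ∈ σ, p.1 = x ∨ p.2 = (x : WithTop α) := by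
  simp only [underlyingVertices, mem_biUnion, mem_pairVertexSet]

theorem underlyingVertices_insert (a b : α) (σ : Finset (α × WithTop α)) :
    underlyingVertices (insert (a, (b : WithTop α)) σ) =
      insert a (insert b (underlyingVertices σ)) := by
  simp [underlyingVertices, pairVertexSet, biUnion_insert, insert_union]

theorem insert_insert_eq_and_not_mem_and_mem_iff {a b : α} {S T : Finset α} (hab : a ≠ b)
    (ha : a ∉ S) (hb : b ∉ S) :
    insert a (insert b T) = insert a (insert b S) ∧ ¬(a ∈ T ∧ b ∈ T) ↔
      T = insert a S ∨ T = insert b S ∨ T = S := by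
  refine ⟨fun ⟨h, _⟩ => ?_, by grind⟩
  have hx : ∀ x, x = a ∨ x = b ∨ (x ∈ T ↔ x ∈ S) := fun x => by
    have := Finset.ext_iff.1 h x
    grind
  by_cases haT : a ∈ T
  · exact .inl (by ext x; grind)
  · by_cases hbT : b ∈ T
    · exact .inr (.inl (by ext x; grind))
    · exact .inr (.inr (by ext x; grind))

end UnderlyingVertices

section TchebyshevFaces

variable {α : Type*} [LinearOrder α]

/-- A set of pairs `(u, v)` is a face of the Tchebyshev triangulation of a full simplex: each pair
is an interval `u < v`, distinct pairs have distinct right ends, and intervals with distinct left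
ends do not overlap. This is the order-free form of the condition in `tchebFaces`. -/
structure IsTchebFace (σ : Finset (α × WithTop α)) : Prop where
  fst_lt_snd : ∀ p ∈ σ, (p.1 : WithTop α) < p.2
  injOn_snd : Set.InjOn Prod.snd (σ : Set (α × WithTop α))
  snd_le_fst : ∀ p ∈ σ, ∀ q ∈ σ, p.1 < q.1 → p.2 ≤ (q.1 : WithTop α)

theorem IsTchebFace.mono {σ τ : Finset (α × WithTop α)} (hσ : IsTchebFace σ) (hτσ : τ ⊆ σ) :
    IsTchebFace τ where
  fst_lt_snd p hp := hσ.fst_lt_snd p (hτσ hp)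
  injOn_snd := hσ.injOn_snd.mono (coe_subset.2 hτσ)
  snd_le_fst p hp q hq := hσ.snd_le_fst p (hτσ hp) q (hτσ hq)

theorem fst_eq_or_snd_le_fst_of_succ {k : ℕ} {e : Fin k → α × WithTop α}
    (hmono : StrictMono fun i => (e i).2)
    (hsucc : ∀ i j : Fin k, (i : ℕ) + 1 = j → (e i).1 = (e j).1 ∨ (e i).2 ≤ ((e j).1 : WithTop α))
    {i j : Fin k} (hij : i < j) : (e i).1 = (e j).1 ∨ (e i).2 ≤ ((e j).1 : WithTop α) := by
  obtain ⟨j, hj⟩ := j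
  induction j, (show (i : ℕ) + 1 ≤ j from hij) using Nat.le_induction with
  | base => exact hsucc i _ rfl
  | succ m him ih =>
    have hm : m < k := by omega
    have him' : i < ⟨m, hm⟩ := him
    rcases hsucc ⟨m, hm⟩ ⟨m + 1, hj⟩ rfl with hfst | hsnd
    · simpa only [← hfst] using ih hm him'
    · exact .inr ((hmono him').le.trans hsnd)

variable [DecidableEq α]

theorem isTchebFace_image_univ {k : ℕ} {e : Fin k → α × WithTop α}
    (hmono : StrictMono fun i => (e i).2) (hlt : ∀ i, ((e i).1 : WithTop α) < (e i).2)
    (hsucc : ∀ i j : Fin k, (i : ℕ) + 1 = j →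
      (e i).1 = (e j).1 ∨ (e i).2 ≤ ((e j).1 : WithTop α)) :
    IsTchebFace (univ.image e) where
  fst_lt_snd := by simpa using hlt
  injOn_snd := by
    rintro p hp q hq hpq
    obtain ⟨i, -, rfl⟩ := mem_image.1 hp
    obtain ⟨j, -, rfl⟩ := mem_image.1 hq
    rw [hmono.injective hpq]
  snd_le_fst := by
    simp only [mem_image, mem_univ, true_and, forall_exists_index,
      forall_apply_eq_imp_iff]
    intro i j hij
    rcases lt_trichotomy i j with h | rfl | h
    · exact (fst_eq_or_snd_le_fst_of_succ hmono hsucc h).resolve_left hij.ne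
    · exact absurd hij (lt_irrefl _)
    · have hji := (fst_eq_or_snd_le_fst_of_succ hmono hsucc h).resolve_left hij.ne'
      exact absurd ((hlt j).trans_le hji) (WithTop.coe_lt_coe.2 hij).asymm

theorem IsTchebFace.exists_strictMono {σ : Finset (α × WithTop α)} (hσ : IsTchebFace σ) :
    ∃ e : Fin #σ → α × WithTop α, σ = univ.image e ∧ StrictMono fun i => (e i).2 := by
  have hcard : #(σ.image Prod.snd) = #σ := card_image_of_injOn hσ.injOn_snd
  let r := (σ.image Prod.snd).orderEmbOfFin hcard
  have hr : ∀ i, ∃ p ∈ σ, p.2 = r i := fun i =>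
    mem_image.1 (orderEmbOfFin_mem _ hcard i)
  choose e he her using hr
  refine ⟨e, ?_, fun i j hij => by simpa only [her] using r.strictMono hij⟩
  refine (eq_of_subset_of_card_le (image_subset_iff.2 fun i _ => he i) ?_).symm
  have he_inj : Function.Injective e := fun i j hij => r.injective (by rw [← her, ← her, hij])
  rw [card_image_of_injective _ he_inj, card_fin]

theorem mem_tchebFaces {A : Finset (Finset α)} {k : ℕ} {σ : Finset (α × WithTop α)} :
    σ ∈ tchebFaces A k ↔ IsTchebFace σ ∧ #σ = k ∧ underlyingVertices σ ∈ A := by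
  constructor
  · rintro ⟨e, rfl, hmono, hlt, hA, hsucc⟩
    refine ⟨isTchebFace_image_univ hmono hlt hsucc, ?_, ?_⟩
    · have he : Function.Injective e := fun i j hij => hmono.injective (congrArg Prod.snd hij)
      rw [card_image_of_injective _ he, card_fin]
    · rwa [underlyingVertices, image_biUnion]
  · rintro ⟨hσ, rfl, hA⟩
    obtain ⟨e, he, hmono⟩ := hσ.exists_strictMono
    have hmem : ∀ i, e i ∈ σ := fun i => he ▸ mem_image_of_mem e (mem_univ i)
    refine ⟨e, he, hmono, fun i => hσ.fst_lt_snd _ (hmem i), ?_, fun i j hij => ?_⟩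
    · rwa [underlyingVertices, he, image_biUnion] at hA
    · have hlt : (e i).2 < (e j).2 := hmono (Fin.lt_def.2 (by omega))
      rcases lt_trichotomy (e i).1 (e j).1 with h | h | h
      · exact .inr (hσ.snd_le_fst _ (hmem i) _ (hmem j) h)
      · exact .inl h
      · have hle := hσ.snd_le_fst _ (hmem j) _ (hmem i) h
        exact absurd (hσ.fst_lt_snd _ (hmem i)) (hle.trans' hlt.le).not_gt

section Recursion

variable {σ : Finset (α × WithTop α)} {a b : α}

theorem IsTchebFace.coe_le_snd (hσ : IsTchebFace σ) (hab : a < b)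
    (hgap : ∀ x ∈ underlyingVertices σ, x = a ∨ b ≤ x) {p : α × WithTop α} (hp : p ∈ σ) :
    (b : WithTop α) ≤ p.2 := by
  obtain ⟨u, v⟩ := p
  have huv : (u : WithTop α) < v := hσ.fst_lt_snd _ hp
  have hu : a ≤ u := by
    rcases hgap u (mem_underlyingVertices.2 ⟨_, hp, .inl rfl⟩) with h | h
    exacts [h.ge, hab.le.trans h]
  cases v with
  | top => exact le_top
  | coe v =>
    have hav : a < v := hu.trans_lt (WithTop.coe_lt_coe.1 huv)
    have hv := hgap v (mem_underlyingVertices.2 ⟨_, hp, .inr rfl⟩)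
    exact WithTop.coe_le_coe.2 (hv.resolve_left hav.ne')

theorem IsTchebFace.coe_lt_snd (hσ : IsTchebFace σ) (hab : a < b)
    (hgap : ∀ x ∈ underlyingVertices σ, x = a ∨ b ≤ x) (hmem : (a, (b : WithTop α)) ∉ σ)
    {p : α × WithTop α} (hp : p ∈ σ) : (b : WithTop α) < p.2 := by
  refine (hσ.coe_le_snd hab hgap hp).lt_of_ne fun hb => hmem ?_
  have hlt : p.1 < b := WithTop.coe_lt_coe.1 (hb ▸ hσ.fst_lt_snd p hp)
  have ha : p.1 = a :=
    (hgap p.1 (mem_underlyingVertices.2 ⟨p, hp, .inl rfl⟩)).resolve_right hlt.not_ge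
  rwa [← ha, hb]

theorem IsTchebFace.pair_mem_iff (hσ : IsTchebFace σ) (hab : a < b)
    (hgap : ∀ x ∈ underlyingVertices σ, x = a ∨ b ≤ x) :
    (a, (b : WithTop α)) ∈ σ ↔ a ∈ underlyingVertices σ ∧ b ∈ underlyingVertices σ := by
  refine ⟨fun h => ⟨mem_underlyingVertices.2 ⟨_, h, .inl rfl⟩,
    mem_underlyingVertices.2 ⟨_, h, .inr rfl⟩⟩, fun ⟨ha, hb⟩ => by_contra fun hmem => ?_⟩
  have hlt : ∀ p ∈ σ, (b : WithTop α) < p.2 := fun p hp => hσ.coe_lt_snd hab hgap hmem hp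
  obtain ⟨p, hp, hpa⟩ := mem_underlyingVertices.1 ha
  obtain ⟨q, hq, hqb⟩ := mem_underlyingVertices.1 hb
  replace hpa : p.1 = a := hpa.resolve_right fun h =>
    ((hlt p hp).trans_eq h).not_gt (WithTop.coe_lt_coe.2 hab)
  replace hqb : q.1 = b := hqb.resolve_right (hlt q hq).ne'
  have hpq := hσ.snd_le_fst p hp q hq (by rwa [hpa, hqb])
  exact (hlt p hp).not_ge (hqb ▸ hpq)

theorem IsTchebFace.insert_pair (hσ : IsTchebFace σ) (hab : a < b)
    (hgap : ∀ x ∈ underlyingVertices σ, x = a ∨ b ≤ x) (hmem : (a, (b : WithTop α)) ∉ σ) :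
    IsTchebFace (insert (a, (b : WithTop α)) σ) := by
  have hlt : ∀ p ∈ σ, (b : WithTop α) < p.2 := fun p hp => hσ.coe_lt_snd hab hgap hmem hp
  have hfst : ∀ p ∈ σ, p.1 = a ∨ b ≤ p.1 := fun p hp =>
    hgap p.1 (mem_underlyingVertices.2 ⟨p, hp, .inl rfl⟩)
  refine ⟨?_, ?_, ?_⟩
  · simpa [hab] using hσ.fst_lt_snd
  · rw [coe_insert, Set.injOn_insert (by simpa using hmem)]
    refine ⟨hσ.injOn_snd, ?_⟩
    rintro ⟨p, hp, hpb⟩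
    exact (hlt p hp).ne' hpb
  · intro p hp q hq hpq
    rcases mem_insert.1 hp with rfl | hp <;> rcases mem_insert.1 hq with rfl | hq
    · exact absurd hpq (lt_irrefl _)
    · exact WithTop.coe_le_coe.2 ((hfst q hq).resolve_left hpq.ne')
    · rcases hfst p hp with h | h
      exacts [absurd h hpq.ne, absurd hpq (hab.trans_le h).asymm]
    · exact hσ.snd_le_fst p hp q hq hpq

end Recursion

/-- The faces of the Tchebyshev triangulation whose set of underlying vertices is exactly `S`. -/
noncomputable def tchebFacesOn (S : Finset α) : Finset (Finset (α × WithTop α)) :=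
  open Classical in
  {σ ∈ (S ×ˢ insert ⊤ (S.image WithTop.some)).powerset |
    IsTchebFace σ ∧ underlyingVertices σ = S}

theorem mem_tchebFacesOn {S : Finset α} {σ : Finset (α × WithTop α)} :
    σ ∈ tchebFacesOn S ↔ IsTchebFace σ ∧ underlyingVertices σ = S := by
  simp only [tchebFacesOn, mem_filter, mem_powerset, and_iff_right_iff_imp]
  rintro ⟨-, rfl⟩ ⟨u, v⟩ hp
  have hu : u ∈ underlyingVertices σ := mem_underlyingVertices.2 ⟨_, hp, .inl rfl⟩
  cases v with
  | top => simp [hu]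
  | coe v =>
    have hv : v ∈ underlyingVertices σ := mem_underlyingVertices.2 ⟨_, hp, .inr rfl⟩
    simp [hu, hv]

@[simp]
theorem tchebFacesOn_empty : tchebFacesOn (∅ : Finset α) = {∅} := by
  ext σ
  rw [mem_tchebFacesOn, mem_singleton]
  constructor
  · rintro ⟨-, hσ⟩
    refine eq_empty_of_forall_notMem fun p hp => notMem_empty p.1 ?_
    exact hσ ▸ mem_underlyingVertices.2 ⟨p, hp, .inl rfl⟩
  · rintro rfl
    exact ⟨⟨by simp, by simp, by simp⟩, rfl⟩

@[simp]
theorem tchebFacesOn_singleton (a : α) : tchebFacesOn {a} = {{(a, ⊤)}} := by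
  ext σ
  rw [mem_tchebFacesOn, mem_singleton]
  constructor
  · rintro ⟨hσ, hV⟩
    have hmem : ∀ x ∈ underlyingVertices σ, x = a := fun x hx => mem_singleton.1 (hV ▸ hx)
    have hall : ∀ p ∈ σ, p = (a, ⊤) := by
      rintro ⟨u, v⟩ hp
      obtain rfl := hmem u (mem_underlyingVertices.2 ⟨_, hp, .inl rfl⟩)
      cases v with
      | top => rfl
      | coe v =>
        obtain rfl := hmem v (mem_underlyingVertices.2 ⟨_, hp, .inr rfl⟩)
        exact absurd (hσ.fst_lt_snd _ hp) (lt_irrefl _)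
    obtain ⟨p, hp, -⟩ := mem_underlyingVertices.1 (hV ▸ mem_singleton_self a)
    exact eq_singleton_iff_unique_mem.2 ⟨hall p hp ▸ hp, hall⟩
  · rintro rfl
    exact ⟨⟨by simp, by simp, by simp⟩, by simp [underlyingVertices, pairVertexSet]⟩

theorem tchebFacesOn_insert_insert {a b : α} {S : Finset α} (hab : a < b)
    (hS : ∀ x ∈ S, b < x) :
    tchebFacesOn (insert a (insert b S)) =
      (tchebFacesOn (insert a S) ∪ tchebFacesOn (insert b S) ∪ tchebFacesOn S).image
        (insert (a, (b : WithTop α))) := by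
  have haS : a ∉ S := fun h => (hab.trans (hS a h)).false
  have hbS : b ∉ S := fun h => (hS b h).false
  have hgap : ∀ x ∈ insert a (insert b S), x = a ∨ b ≤ x := by
    simp only [mem_insert]
    rintro x (rfl | rfl | hx)
    exacts [.inl rfl, .inr le_rfl, .inr (hS x hx).le]
  ext σ
  simp only [mem_image, mem_union, mem_tchebFacesOn, or_assoc, ← and_or_left,
    ← insert_insert_eq_and_not_mem_and_mem_iff hab.ne haS hbS]
  constructor
  · rintro ⟨hσ, hV⟩
    have hmem : (a, (b : WithTop α)) ∈ σ :=
      (hσ.pair_mem_iff hab (by rwa [hV])).2 (by simp [hV])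
    have hσ' := hσ.mono (erase_subset (a, (b : WithTop α)) σ)
    have hV' := underlyingVertices_insert a b (σ.erase (a, (b : WithTop α)))
    rw [insert_erase hmem, hV] at hV'
    refine ⟨σ.erase (a, b), ⟨hσ', hV'.symm, ?_⟩, insert_erase hmem⟩
    rw [← hσ'.pair_mem_iff hab fun x hx => hgap x (hV' ▸ by simp [hx])]
    exact notMem_erase _ _
  · rintro ⟨τ, ⟨hτ, hV, hnot⟩, rfl⟩
    have hgap' : ∀ x ∈ underlyingVertices τ, x = a ∨ b ≤ x := fun x hx =>
      hgap x (hV ▸ by simp [hx])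
    rw [← hτ.pair_mem_iff hab hgap'] at hnot
    exact ⟨hτ.insert_pair hab hgap' hnot, (underlyingVertices_insert a b τ).trans hV⟩

@[elab_as_elim]
theorem finset_induction_on_two_min {p : Finset α → Prop} (S : Finset α) (empty : p ∅)
    (singleton : ∀ a, p {a})
    (insert_insert : ∀ (a b : α) (S : Finset α), a < b → (∀ x ∈ S, b < x) →
      p (insert a S) → p (insert b S) → p S → p (insert a (insert b S))) : p S := by
  induction hn : #S using Nat.strong_induction_on generalizing S with
  | _ n ih =>
    subst hn
    induction S using induction_on_min with
    | empty => exact empty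
    | insert a S ha _ =>
      induction S using induction_on_min with
      | empty => exact singleton a
      | insert b S hb _ =>
        have hab : a < b := ha b (mem_insert_self b S)
        have haS : a ∉ insert b S := fun h => (ha a h).false
        have hbS : b ∉ S := fun h => (hb b h).false
        have hcard : #(insert a (insert b S)) = #S + 2 := by
          rw [card_insert_of_notMem haS, card_insert_of_notMem hbS]
        rw [hcard] at ih
        have hinsert : ∀ x, #(insert x S) < #S + 2 := fun x =>
          Nat.lt_succ_of_le (card_insert_le x S)
        exact insert_insert a b S hab hb (ih _ (hinsert a) _ rfl) (ih _ (hinsert b) _ rfl)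
          (ih _ (by omega) _ rfl)

theorem disjoint_tchebFacesOn {S T : Finset α} (hST : S ≠ T) :
    Disjoint (tchebFacesOn S) (tchebFacesOn T) :=
  disjoint_left.2 fun _ hS hT =>
    hST ((mem_tchebFacesOn.1 hS).2.symm.trans (mem_tchebFacesOn.1 hT).2)

theorem sum_pow_card_tchebFacesOn_insert_insert {R : Type*} [CommSemiring R] (y : R) {a b : α}
    {S : Finset α} (hab : a < b) (hS : ∀ x ∈ S, b < x) :
    ∑ σ ∈ tchebFacesOn (insert a (insert b S)), y ^ #σ =
      y * (∑ σ ∈ tchebFacesOn (insert a S), y ^ #σ + ∑ σ ∈ tchebFacesOn (insert b S), y ^ #σ +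
        ∑ σ ∈ tchebFacesOn S, y ^ #σ) := by
  have haS : a ∉ S := fun h => (hab.trans (hS a h)).false
  have hbS : b ∉ S := fun h => (hS b h).false
  have hne : insert a S ≠ insert b S := fun h =>
    hab.ne ((insert_inj haS).1 h)
  have hdisj : Disjoint (tchebFacesOn (insert a S) ∪ tchebFacesOn (insert b S))
      (tchebFacesOn S) :=
    disjoint_union_left.2 ⟨disjoint_tchebFacesOn (insert_ne_self.2 haS),
      disjoint_tchebFacesOn (insert_ne_self.2 hbS)⟩
  have hmem : ∀ τ ∈ tchebFacesOn (insert a S) ∪ tchebFacesOn (insert b S) ∪ tchebFacesOn S,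
      (a, (b : WithTop α)) ∉ τ := by
    intro τ hτ hpair
    simp only [mem_union, mem_tchebFacesOn, or_assoc, ← and_or_left,
      ← insert_insert_eq_and_not_mem_and_mem_iff hab.ne haS hbS] at hτ
    exact hτ.2.2 ⟨mem_underlyingVertices.2 ⟨_, hpair, .inl rfl⟩,
      mem_underlyingVertices.2 ⟨_, hpair, .inr rfl⟩⟩
  have hinj : Set.InjOn (insert (a, (b : WithTop α)))
      {τ : Finset (α × WithTop α) | (a, (b : WithTop α)) ∉ τ} := fun τ hτ τ' hτ' h => by
    rw [← erase_insert hτ, h, erase_insert hτ']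
  rw [tchebFacesOn_insert_insert hab hS, sum_image (hinj.mono hmem),
    sum_congr rfl fun τ hτ => by
      rw [card_insert_of_notMem (hmem τ hτ), pow_succ'],
    ← mul_sum, sum_union hdisj, sum_union (disjoint_tchebFacesOn hne)]

theorem card_le_card_of_mem_tchebFacesOn {S : Finset α} {σ : Finset (α × WithTop α)}
    (hσ : σ ∈ tchebFacesOn S) : #σ ≤ #S := by
  induction S using finset_induction_on_two_min generalizing σ with
  | empty => simp_all
  | singleton a => simp_all
  | insert_insert a b S hab hS iha ihb ih =>
    have haS : a ∉ insert b S := by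
      simp only [mem_insert, hab.ne, false_or]
      exact fun h => (hab.trans (hS a h)).false
    have hbS : b ∉ S := fun h => (hS b h).false
    rw [card_insert_of_notMem haS, card_insert_of_notMem hbS]
    rw [tchebFacesOn_insert_insert hab hS] at hσ
    obtain ⟨τ, hτ, rfl⟩ := mem_image.1 hσ
    have hτcard : #τ ≤ #S + 1 := by
      rcases mem_union.1 hτ with hτ | hτ
      · rcases mem_union.1 hτ with hτ | hτ
        exacts [(iha hτ).trans (card_insert_le a S),
          (ihb hτ).trans (card_insert_le b S)]
      · exact (ih hτ).trans (Nat.le_succ _)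
    exact (card_insert_le _ τ).trans (Nat.succ_le_succ hτcard)

theorem nonempty_of_mem_tchebFacesOn {S : Finset α} {σ : Finset (α × WithTop α)}
    (hσ : σ ∈ tchebFacesOn S) (hS : S.Nonempty) : σ.Nonempty := by
  obtain ⟨x, hx⟩ := hS
  obtain ⟨p, hp, -⟩ := mem_underlyingVertices.1 ((mem_tchebFacesOn.1 hσ).2 ▸ hx)
  exact ⟨p, hp⟩

theorem coe_filter_biUnion_tchebFacesOn (A : Finset (Finset α)) (k : ℕ) :
    ({σ ∈ A.biUnion tchebFacesOn | #σ = k} : Finset (Finset (α × WithTop α))) =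
      tchebFaces A k := by
  ext σ
  simp only [coe_filter, mem_biUnion, mem_tchebFacesOn, Set.mem_ofPred_eq,
    mem_tchebFaces]
  grind

theorem sum_ncard_tchebFaces_mul_pow {R : Type*} [CommSemiring R] (y : R) {A : Finset (Finset α)}
    {D : ℕ} (hne : ∀ S ∈ A, S.Nonempty) (hcard : ∀ S ∈ A, #S ≤ D) :
    ∑ k ∈ Icc 1 D, ((tchebFaces A k).ncard : R) * y ^ k =
      ∑ S ∈ A, ∑ σ ∈ tchebFacesOn S, y ^ #σ := by
  have hmaps : ∀ σ ∈ A.biUnion tchebFacesOn, #σ ∈ Icc 1 D := by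
    intro σ hσ
    obtain ⟨S, hS, hσS⟩ := mem_biUnion.1 hσ
    exact mem_Icc.2 ⟨(nonempty_of_mem_tchebFacesOn hσS (hne S hS)).card_pos,
      (card_le_card_of_mem_tchebFacesOn hσS).trans (hcard S hS)⟩
  rw [← sum_biUnion fun S _ T _ hST => disjoint_tchebFacesOn hST,
    ← sum_fiberwise_of_maps_to' hmaps fun k => y ^ k]
  refine sum_congr rfl fun k _ => ?_
  rw [← coe_filter_biUnion_tchebFacesOn, Set.ncard_coe_finset, sum_const, nsmul_eq_mul]
end TchebyshevFaces

section Chebyshev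

open Polynomial Polynomial.Chebyshev

variable {R : Type*} [CommRing R]

theorem fwdDiff_iter_chebyshevT_add_two (n : ℕ) :
    (fwdDiff 1)^[n + 2] (T R) 0 =
      2 * (X - 1) * ((fwdDiff 1)^[n + 1] (T R) 0 + (fwdDiff 1)^[n] (T R) 0) := by
  have hΔ : (fwdDiff 1)^[2] (T R) = (2 * (X - 1) : R[X]) • (fwdDiff 1 (T R) + T R) := by
    funext m
    simp only [Function.iterate_succ, Function.iterate_zero, Function.comp_apply, id_eq, fwdDiff,
      Pi.smul_apply, Pi.add_apply, smul_eq_mul]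
    have h := T_add_two R m
    rw [show m + 1 + 1 = m + 2 by ring, h]
    ring
  rw [Function.iterate_add_apply, hΔ, fwdDiff_iter_const_smul, fwdDiff_iter_add,
    ← Function.iterate_succ_apply]
  rfl

theorem sum_powerset_fwdDiff_iter_chebyshevT {ι : Type*} (s : Finset ι) :
    ∑ t ∈ s.powerset, (fwdDiff 1)^[#t] (T R) 0 = T R #s := by
  have h := shift_eq_sum_fwdDiff_iter (1 : ℤ) (T R) #s 0
  rw [zero_add, nsmul_one] at h
  rw [h, sum_powerset_apply_card fun n => (fwdDiff 1)^[n] (T R) 0]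

theorem sum_pow_card_tchebFacesOn {α : Type*} [LinearOrder α] [DecidableEq α] {half : R[X]}
    (hhalf : 2 * half = 1) (S : Finset α) :
    ∑ σ ∈ tchebFacesOn S, ((X - 1) * half) ^ #σ = half ^ #S * (fwdDiff 1)^[#S] (T R) 0 := by
  induction S using finset_induction_on_two_min with
  | empty => simp
  | singleton a => simp [fwdDiff, mul_comm]
  | insert_insert a b S hab hS iha ihb ih =>
    have hbS : b ∉ S := fun h => (hS b h).false
    have haS : a ∉ S := fun h => (hab.trans (hS a h)).false
    have habS : a ∉ insert b S := by simp [hab.ne, haS]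
    rw [card_insert_of_notMem haS] at iha
    rw [card_insert_of_notMem hbS] at ihb
    rw [sum_pow_card_tchebFacesOn_insert_insert _ hab hS, iha, ihb, ih,
      card_insert_of_notMem habS, card_insert_of_notMem hbS,
      fwdDiff_iter_chebyshevT_add_two]
    linear_combination -(X - 1) * half * half ^ #S * ((fwdDiff 1)^[#S] (T R) 0) * hhalf

end Chebyshev

section SignedUnusedColors

/-- The vertex set of the face `(F, Q, B)` of the signed unused color complex. -/
def signedFace (F Q B : Finset ℕ) : Finset (Finset ℕ × ℕ × Bool) :=
  Q.image fun q => (F, q, decide (q ∈ B))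

theorem mem_signedFace {F Q B : Finset ℕ} {x : Finset ℕ × ℕ × Bool} :
    x ∈ signedFace F Q B ↔ x.1 = F ∧ x.2.1 ∈ Q ∧ (x.2.2 = true ↔ x.2.1 ∈ B) := by
  obtain ⟨G, q, ε⟩ := x
  simp only [signedFace, mem_image, Prod.mk.injEq]
  grind

theorem card_signedFace (F Q B : Finset ℕ) : #(signedFace F Q B) = #Q :=
  card_image_of_injective _ fun _ _ h => congrArg (fun x => x.2.1) h

theorem signedFace_inj {F F' Q Q' B B' : Finset ℕ} (hQ : Q.Nonempty) (hB : B ⊆ Q) (hB' : B' ⊆ Q')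
    (h : signedFace F Q B = signedFace F' Q' B') : F = F' ∧ Q = Q' ∧ B = B' := by
  have hmem : ∀ G q ε, G = F ∧ q ∈ Q ∧ (ε = true ↔ q ∈ B) ↔
      G = F' ∧ q ∈ Q' ∧ (ε = true ↔ q ∈ B') := fun G q ε => by
    simpa only [mem_signedFace] using Finset.ext_iff.1 h (G, q, ε)
  obtain ⟨q₀, hq₀⟩ := hQ
  obtain rfl : F = F' := ((hmem F q₀ (decide (q₀ ∈ B))).1 ⟨rfl, hq₀, by simp⟩).1
  refine ⟨rfl, ext fun q => ⟨fun hq => ?_, fun hq => ?_⟩, ext fun q => ?_⟩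
  · exact ((hmem F q (decide (q ∈ B))).1 ⟨rfl, hq, decide_eq_true_iff⟩).2.1
  · exact ((hmem F q (decide (q ∈ B'))).2 ⟨rfl, hq, decide_eq_true_iff⟩).2.1
  · simpa [and_iff_right_of_imp (@hB q), and_iff_right_of_imp (@hB' q)] using hmem F q true

/-- The faces `(F, Q, B)` of the signed unused color complex, of dimension `#Q - 1`. -/
def signedUnusedFaces (Γ : Finset (Finset ℕ)) (c : ℕ → ℕ) (D : ℕ) :
    Finset (Σ _ : Finset ℕ, Σ _ : Finset ℕ, Finset ℕ) :=
  Γ.sigma fun F => Finset.sigma {Q ∈ (Icc 1 D \ F.image c).powerset | Q ≠ ∅} powerset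

theorem mem_signedUnusedFaces {Γ : Finset (Finset ℕ)} {c : ℕ → ℕ} {D : ℕ}
    {x : Σ _ : Finset ℕ, Σ _ : Finset ℕ, Finset ℕ} :
    x ∈ signedUnusedFaces Γ c D ↔ x.1 ∈ Γ ∧ (x.2.1 ⊆ Icc 1 D \ x.1.image c ∧ x.2.1 ≠ ∅) ∧
      x.2.2 ⊆ x.2.1 := by
  simp only [signedUnusedFaces, mem_sigma, mem_filter, mem_powerset]

theorem image_signedUnusedFaces (Γ : Finset (Finset ℕ)) (c : ℕ → ℕ) (D : ℕ) :
    (signedUnusedFaces Γ c D).image (fun x => signedFace x.1 x.2.1 x.2.2) =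
      signedUnusedVertexSets Γ c D := by
  ext S
  simp [signedUnusedVertexSets, mem_signedUnusedFaces, signedFace, and_assoc]

theorem injOn_signedUnusedFaces (Γ : Finset (Finset ℕ)) (c : ℕ → ℕ) (D : ℕ) :
    Set.InjOn (fun x => signedFace x.1 x.2.1 x.2.2)
      (signedUnusedFaces Γ c D : Set (Σ _ : Finset ℕ, Σ _ : Finset ℕ, Finset ℕ)) := by
  rintro ⟨F, Q, B⟩ hx ⟨F', Q', B'⟩ hx' h
  obtain ⟨-, ⟨-, hQ⟩, hB⟩ := mem_signedUnusedFaces.1 (mem_coe.1 hx)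
  obtain ⟨-, -, hB'⟩ := mem_signedUnusedFaces.1 (mem_coe.1 hx')
  obtain ⟨rfl, rfl, rfl⟩ := signedFace_inj (nonempty_iff_ne_empty.2 hQ) hB hB' h
  rfl

theorem nonempty_and_card_le_of_mem_signedUnusedVertexSets {Γ : Finset (Finset ℕ)} {c : ℕ → ℕ}
    {D : ℕ} {S : Finset (Finset ℕ × ℕ × Bool)} (hS : S ∈ signedUnusedVertexSets Γ c D) :
    S.Nonempty ∧ #S ≤ D := by
  rw [← image_signedUnusedFaces, mem_image] at hS
  obtain ⟨⟨F, Q, B⟩, hx, rfl⟩ := hS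
  obtain ⟨-, ⟨hQ, hne⟩, -⟩ := mem_signedUnusedFaces.1 hx
  refine ⟨(nonempty_iff_ne_empty.2 hne).image _, ?_⟩
  calc #(signedFace F Q B) = #Q := card_signedFace F Q B
    _ ≤ #(Icc 1 D) := card_le_card (hQ.trans sdiff_subset)
    _ = D := by simp

theorem sum_signedUnusedVertexSets_card {M : Type*} [AddCommMonoid M] (Γ : Finset (Finset ℕ))
    (c : ℕ → ℕ) (D : ℕ) (f : ℕ → M) :
    ∑ S ∈ signedUnusedVertexSets Γ c D, f #S =
      ∑ F ∈ Γ, ∑ Q ∈ (Icc 1 D \ F.image c).powerset with Q ≠ ∅, 2 ^ #Q • f #Q := by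
  rw [← image_signedUnusedFaces, sum_image (injOn_signedUnusedFaces Γ c D)]
  simp only [card_signedFace, signedUnusedFaces, sum_sigma, sum_const, card_powerset]

theorem card_unusedColors {D : ℕ} {F : Finset ℕ} {c : ℕ → ℕ} (hcol : ∀ x ∈ F, c x ∈ Icc 1 D)
    (hinj : Set.InjOn c (F : Set ℕ)) : #(Icc 1 D \ F.image c) = D - #F := by
  rw [card_sdiff_of_subset (image_subset_iff.2 hcol),
    card_image_of_injOn hinj, Nat.card_Icc, Nat.add_sub_cancel]

theorem card_le_of_injOn_colors {D : ℕ} {F : Finset ℕ} {c : ℕ → ℕ}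
    (hcol : ∀ x ∈ F, c x ∈ Icc 1 D) (hinj : Set.InjOn c (F : Set ℕ)) : #F ≤ D := by
  simpa using card_le_card_of_injOn c hcol hinj

theorem sum_card_sub_card_eq_sum_faceCount {M : Type*} [AddCommMonoid M] {Γ : Finset (Finset ℕ)}
    {D : ℕ} (hΓ : ∀ F ∈ Γ, #F ≤ D) (f : ℕ → M) :
    ∑ F ∈ Γ, f (D - #F) = ∑ j ∈ range (D + 1), faceCount Γ (D - j) • f j := by
  have hmaps : ∀ F ∈ Γ, #F ∈ range (D + 1) := fun F hF => mem_range_succ_iff.2 (hΓ F hF)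
  calc ∑ F ∈ Γ, f (D - #F)
      = ∑ i ∈ range (D + 1), faceCount Γ i • f (D - i) := by
        rw [← sum_fiberwise_of_maps_to' hmaps fun i => f (D - i)]
        exact sum_congr rfl fun i _ => sum_const _
    _ = ∑ j ∈ range (D + 1), faceCount Γ (D - j) • f (D - (D - j)) :=
        (sum_flip fun i => faceCount Γ i • f (D - i)).symm
    _ = ∑ j ∈ range (D + 1), faceCount Γ (D - j) • f j :=
        sum_congr rfl fun j hj => by rw [Nat.sub_sub_self (mem_range_succ_iff.1 hj)]

end SignedUnusedColors

section Polynomials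

open Polynomial Polynomial.Chebyshev

theorem sum_signedUnusedVertexSets_sum_tchebFacesOn {R : Type*} [CommRing R] {half : R[X]}
    (hhalf : 2 * half = 1) (Γ : Finset (Finset ℕ)) (c : ℕ → ℕ) (D : ℕ)
    [LinearOrder (Finset ℕ × ℕ × Bool)] :
    ∑ S ∈ signedUnusedVertexSets Γ c D, ∑ σ ∈ tchebFacesOn S, ((X - 1) * half) ^ #σ =
      ∑ F ∈ Γ, (T R #(Icc 1 D \ F.image c) - 1) := by
  have hterm : ∀ n : ℕ,
      2 ^ n • (half ^ n * (fwdDiff 1)^[n] (T R) 0) = (fwdDiff 1)^[n] (T R) 0 := fun n => by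
    rw [nsmul_eq_mul, ← mul_assoc, Nat.cast_pow, Nat.cast_ofNat, ← mul_pow, hhalf, one_pow,
      one_mul]
  simp only [sum_pow_card_tchebFacesOn hhalf]
  rw [sum_signedUnusedVertexSets_card Γ c D fun n => half ^ n * (fwdDiff 1)^[n] (T R) 0]
  refine sum_congr rfl fun F _ => ?_
  simp only [hterm]
  rw [← sum_powerset_fwdDiff_iter_chebyshevT, filter_ne', sum_erase_eq_sub (empty_mem_powerset _)]
  simp

theorem sum_ncard_tchebFaces_signedUnused {R : Type*} [CommRing R] {half : R[X]}
    (hhalf : 2 * half = 1) {Γ : Finset (Finset ℕ)} {c : ℕ → ℕ} {D : ℕ}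
    (hcol : ∀ F ∈ Γ, ∀ x ∈ F, c x ∈ Icc 1 D) (hinj : ∀ F ∈ Γ, Set.InjOn c (F : Set ℕ))
    [LinearOrder (Finset ℕ × ℕ × Bool)] :
    ∑ k ∈ Icc 1 D,
        ((tchebFaces (signedUnusedVertexSets Γ c D) k).ncard : R[X]) * ((X - 1) * half) ^ k =
      ∑ j ∈ range (D + 1), (faceCount Γ (D - j) : R[X]) * (T R j - 1) := by
  have hfaces := @nonempty_and_card_le_of_mem_signedUnusedVertexSets Γ c D
  rw [sum_ncard_tchebFaces_mul_pow _ (fun S hS => (hfaces hS).1) fun S hS => (hfaces hS).2,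
    sum_signedUnusedVertexSets_sum_tchebFacesOn hhalf,
    sum_congr rfl fun F hF => by rw [card_unusedColors (hcol F hF) (hinj F hF)],
    sum_card_sub_card_eq_sum_faceCount
      (fun F hF => card_le_of_injOn_colors (hcol F hF) (hinj F hF)) fun n => T R n - 1]
  simp only [nsmul_eq_mul]

theorem g_poly_eq_F_tcheb_signedUnused_general {R : Type*} [CommRing R] {half : R[X]}
    (hhalf : 2 * half = 1) {Γ : Finset (Finset ℕ)} {c : ℕ → ℕ} {D : ℕ}
    (hcol : ∀ F ∈ Γ, ∀ x ∈ F, c x ∈ Icc 1 D) (hinj : ∀ F ∈ Γ, Set.InjOn c (F : Set ℕ))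
    [LinearOrder (Finset ℕ × ℕ × Bool)] :
    half * (((faceCount Γ D : R[X]) + 2 * ∑ j ∈ Icc 1 D, (faceCount Γ (D - j) : R[X]) * T R j)
          + (faceCount Γ D : R[X]))
      - ∑ j ∈ range (D + 1), (faceCount Γ (D - j) : R[X]) + 1 =
    1 + ∑ k ∈ Icc 1 D,
      ((tchebFaces (signedUnusedVertexSets Γ c D) k).ncard : R[X]) * ((X - 1) * half) ^ k := by
  have hsplit : ∑ j ∈ range (D + 1), (faceCount Γ (D - j) : R[X]) * T R j =
      faceCount Γ D + ∑ j ∈ Icc 1 D, (faceCount Γ (D - j) : R[X]) * T R j := by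
    rw [range_eq_Ico, sum_eq_sum_Ico_succ_bot D.add_one_pos, Finset.Ico_add_one_right_eq_Icc]
    simp only [Nat.sub_zero, Nat.cast_zero, T_zero, mul_one, zero_add]
  rw [sum_ncard_tchebFaces_signedUnused hhalf hcol hinj]
  simp only [mul_sub, mul_one, sum_sub_distrib, hsplit]
  linear_combination
    (faceCount Γ D + ∑ j ∈ Icc 1 D, (faceCount Γ (D - j) : R[X]) * T R j) * hhalf

end Polynomials

open Polynomial in
/-- Let `d` be even, `D = d/2`, `Γ` a `(D-1)`-dimensional balanced simplicial complex,
`h i = f_{i-1}(Γ)`, and `g(2w) = h_D + 2 ∑_{j=1}^{D} h_{D-j} T_j(w)`.  Then in `ℚ[w]`: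
`(g(2w) + f_{D-1}(Γ))/2 - ∑_{j=0}^{D} f_{D-j-1}(Γ) + 1
  = 1 + ∑_{k=1}^{D} f_{k-1}(T(A_Γ))·((w-1)/2)^k`,
i.e. the left-hand side is the F-polynomial of the Tchebyshev triangulation of the signed
unused color complex of `Γ` (with respect to an arbitrary linear order on its vertices). -/
theorem g_poly_eq_F_tcheb_signedUnused
    (d D : ℕ) (hd : Even d) (hDd : D = d / 2) (hD : 1 ≤ D)
    (Γ : Finset (Finset ℕ))
    (hΓ : IsSimplicialComplex Γ)
    (hdim : ∀ F ∈ Γ, F.card ≤ D) (hpure : ∃ F ∈ Γ, F.card = D)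
    (c : ℕ → ℕ)
    (hcol : ∀ F ∈ Γ, ∀ x ∈ F, c x ∈ Finset.Icc 1 D)
    (hinj : ∀ F ∈ Γ, Set.InjOn c (F : Set ℕ))
    (instL : LinearOrder (Finset ℕ × ℕ × Bool)) :
    C (1 / 2 : ℚ) *
        ((C ((faceCount Γ D : ℚ)) +
            2 * ∑ j ∈ Finset.Icc 1 D,
              C ((faceCount Γ (D - j) : ℚ)) * Polynomial.Chebyshev.T ℚ (j : ℤ))
          + C ((faceCount Γ D : ℚ)))
      - C (∑ j ∈ Finset.range (D + 1), ((faceCount Γ (D - j) : ℚ)))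
      + 1
      = 1 + ∑ k ∈ Finset.Icc 1 D,
          C (((@tchebFaces (Finset ℕ × ℕ × Bool) instL _
                (signedUnusedVertexSets Γ c D) k).ncard : ℚ)) *
            ((X - 1) * C (1 / 2 : ℚ)) ^ k := by
  have hhalf : (2 : ℚ[X]) * C (1 / 2) = 1 := by rw [← C_ofNat, ← C_mul]; norm_num
  simpa only [map_natCast, map_sum] using
    g_poly_eq_F_tcheb_signedUnused_general hhalf hcol hinj
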